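/- arXiv:1211.6563 — 5 statements merged into one kernel-verified Lean document; each statement's English description precedes it below -/
import Mathlib

section
/- For every natural number n, Σ_{i=0}^{n} Σ_{j=0}^{n} C(n,i)·C(n,j)·C(i,j)·C(n−j,i) = Σ_{k=0}^{n} C(n,k)³. -/
open Finset

/-!
Fix `i`. Both `C(n,j) * C(n-j,i)` and `C(n,i) * C(n-i,j)` count the pairs of disjoint subsets of an
`n`-element set with sizes `i` and `j`. Trading the first for the second takes all factors without
`j` out of the inner sum; what remains is `∑ j, C(i,j) * C(n-i,j) = C(n,i)`, a form of Vandermonde's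
identity.
-/

theorem choose_mul_choose_sub_comm (n i j : ℕ) :
    n.choose j * (n - j).choose i = n.choose i * (n - i).choose j := by
  calc
    n.choose j * (n - j).choose i = n.choose (i + j) * (i + j).choose j := by
      rw [Nat.choose_mul (Nat.le_add_left j i), Nat.add_sub_cancel]
    _ = n.choose (i + j) * (i + j).choose i := by rw [Nat.choose_symm_add]
    _ = n.choose i * (n - i).choose j := by
      rw [Nat.choose_mul (Nat.le_add_right i j), Nat.add_sub_cancel_left]

theorem sum_range_choose_mul_choose (m : ℕ) {k N : ℕ} (hkN : k < N) :
    ∑ j ∈ range N, k.choose j * m.choose j = (m + k).choose k := by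
  calc
    ∑ j ∈ range N, k.choose j * m.choose j = ∑ j ∈ range (k + 1), k.choose j * m.choose j := by
      refine (sum_subset (range_subset_range.mpr hkN) fun j _ hj ↦ ?_).symm
      have hkj : k < j := by simpa only [mem_range, Nat.lt_succ_iff, not_le] using hj
      rw [Nat.choose_eq_zero_of_lt hkj, zero_mul]
    _ = ∑ j ∈ range (k + 1), m.choose j * k.choose (k - j) :=
      sum_congr rfl fun j hj ↦ by rw [Nat.choose_symm (mem_range_succ_iff.mp hj), mul_comm]
    _ = (m + k).choose k := by
      rw [Nat.add_choose_eq, Nat.sum_antidiagonal_eq_sum_range_succ_mk]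

theorem sum_range_choose_mul_choose_mul_choose_sub (n : ℕ) {i N : ℕ} (hiN : i < N) :
    ∑ j ∈ range N, n.choose j * i.choose j * (n - j).choose i = n.choose i ^ 2 := by
  have pull_out : ∑ j ∈ range N, n.choose j * i.choose j * (n - j).choose i =
      n.choose i * ∑ j ∈ range N, i.choose j * (n - i).choose j := by
    rw [mul_sum]
    refine sum_congr rfl fun j _ ↦ ?_
    rw [mul_right_comm, choose_mul_choose_sub_comm, mul_assoc, mul_comm ((n - i).choose j)]
  rw [pull_out, sum_range_choose_mul_choose _ hiN]
  obtain hin | hni := le_or_gt i n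
  · rw [Nat.sub_add_cancel hin, sq]
  · rw [Nat.choose_eq_zero_of_lt hni, zero_mul, zero_pow two_ne_zero]

theorem double_sum_binomials_eq_sum_cubes (n : ℕ) :
    (∑ i ∈ Finset.range (n + 1), ∑ j ∈ Finset.range (n + 1),
        n.choose i * n.choose j * i.choose j * (n - j).choose i) =
      ∑ k ∈ Finset.range (n + 1), (n.choose k) ^ 3 := by
  refine sum_congr rfl fun i hi ↦ ?_
  calc
    ∑ j ∈ range (n + 1), n.choose i * n.choose j * i.choose j * (n - j).choose i =
        n.choose i * ∑ j ∈ range (n + 1), n.choose j * i.choose j * (n - j).choose i := by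
      simp only [mul_sum, mul_assoc]
    _ = n.choose i * n.choose i ^ 2 := by
      rw [sum_range_choose_mul_choose_mul_choose_sub n (mem_range.mp hi)]
    _ = n.choose i ^ 3 := (pow_succ' _ 2).symm
end

section
/- For every natural number n, Σ_{i=0}^{n} Σ_{j=0}^{n} Σ_{k=0}^{n} C(n,i)·C(n,j)·C(n−j,i)·C(i,k)·C(n−i,j+k) = Σ_{k=0}^{n} C(n,k)²·C(n+k,n). -/
open Finset

/-!
Vandermonde's convolution collapses the sum over `k` to `C(n, i + j)`, and trinomial revision turns
the summand into `C(n, i) * C(i + j, i) * C(n, i + j) ^ 2`. Read as a function of `i` and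
`m = i + j`, it vanishes unless `i ≤ m ≤ n`, so `j` can be replaced by `m` without changing the
range of summation; a second Vandermonde convolution evaluates the sum over `i` as `C(n + m, n)`.
-/

lemma sum_range_comp_add_eq_sum_range {M : Type*} [AddCommMonoid M] {f : ℕ → M} {i n : ℕ}
    (hlt : ∀ m < i, f m = 0) (hge : ∀ m ≥ n, f m = 0) :
    ∑ j ∈ range n, f (i + j) = ∑ m ∈ range n, f m :=
  calc ∑ j ∈ range n, f (i + j)
      = ∑ m ∈ range (i + n), f m := by
        rw [sum_range_add, sum_eq_zero fun m hm ↦ hlt m (mem_range.mp hm), zero_add]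
    _ = ∑ m ∈ range n, f m := eventually_constant_sum hge (Nat.le_add_left n i)

lemma sum_range_choose_mul_choose_add {a N : ℕ} (haN : a < N) (b j : ℕ) :
    ∑ k ∈ range N, a.choose k * b.choose (j + k) = (a + b).choose (a + j) := by
  have vanish (g : ℕ → ℕ) : ∀ k ≥ a + 1, a.choose k * g k = 0 := fun k hk ↦ by
    rw [Nat.choose_eq_zero_of_lt hk, zero_mul]
  calc ∑ k ∈ range N, a.choose k * b.choose (j + k)
      = ∑ k ∈ range (a + 1), a.choose k * b.choose (j + k) :=
        eventually_constant_sum (vanish fun k ↦ b.choose (j + k)) haN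
    _ = ∑ k ∈ range (a + 1), a.choose (a - k) * b.choose (a + j - (a - k)) := by
        refine sum_congr rfl fun k hk ↦ ?_
        have hka : k ≤ a := mem_range_succ_iff.mp hk
        rw [Nat.choose_symm hka, show a + j - (a - k) = j + k by omega]
    _ = ∑ k ∈ range (a + 1), a.choose k * b.choose (a + j - k) :=
        sum_flip fun k ↦ a.choose k * b.choose (a + j - k)
    _ = ∑ k ∈ range (a + j + 1), a.choose k * b.choose (a + j - k) :=
        (eventually_constant_sum (vanish fun k ↦ b.choose (a + j - k)) (by omega)).symm
    _ = (a + b).choose (a + j) := by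
        rw [Nat.add_choose_eq, Nat.sum_antidiagonal_eq_sum_range_succ_mk]

lemma sum_range_choose_mul_choose_s8 (a b : ℕ) :
    ∑ k ∈ range (a + 1), a.choose k * b.choose k = (a + b).choose a := by
  simpa only [zero_add, add_zero] using sum_range_choose_mul_choose_add a.lt_succ_self b 0

lemma choose_mul_choose_sub (n i j : ℕ) :
    n.choose j * (n - j).choose i = n.choose (i + j) * (i + j).choose i := by
  rw [Nat.choose_symm_add, Nat.choose_mul (Nat.le_add_left j i), Nat.add_sub_cancel]

lemma sum_range_choose_mul_choose_mul_choose_add {n i N : ℕ} (hin : i ≤ n) (hiN : i < N)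
    (j : ℕ) :
    ∑ k ∈ range N,
        n.choose i * n.choose j * (n - j).choose i * i.choose k * (n - i).choose (j + k) =
      n.choose i * (i + j).choose i * n.choose (i + j) ^ 2 :=
  calc ∑ k ∈ range N,
        n.choose i * n.choose j * (n - j).choose i * i.choose k * (n - i).choose (j + k)
      = n.choose i * (n.choose j * (n - j).choose i) *
          ∑ k ∈ range N, i.choose k * (n - i).choose (j + k) := by
        simp only [mul_sum, mul_assoc]
    _ = n.choose i * (n.choose (i + j) * (i + j).choose i) * n.choose (i + j) := by
        rw [choose_mul_choose_sub, sum_range_choose_mul_choose_add hiN, Nat.add_sub_cancel' hin]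
    _ = n.choose i * (i + j).choose i * n.choose (i + j) ^ 2 := by ring

theorem triple_sum_binomials_eq_sum_squares_mul (n : ℕ) :
    (∑ i ∈ Finset.range (n + 1), ∑ j ∈ Finset.range (n + 1), ∑ k ∈ Finset.range (n + 1),
        n.choose i * n.choose j * (n - j).choose i * i.choose k * (n - i).choose (j + k)) =
      ∑ k ∈ Finset.range (n + 1), (n.choose k) ^ 2 * (n + k).choose n := by
  let f (i m : ℕ) : ℕ := n.choose i * m.choose i * n.choose m ^ 2
  have f_of_lt (i : ℕ) : ∀ m < i, f i m = 0 := fun m hm ↦ by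
    simp [f, Nat.choose_eq_zero_of_lt hm]
  have f_of_gt (i : ℕ) : ∀ m ≥ n + 1, f i m = 0 := fun m hm ↦ by
    simp [f, Nat.choose_eq_zero_of_lt hm]
  have sum_f (m : ℕ) : ∑ i ∈ range (n + 1), f i m = n.choose m ^ 2 * (n + m).choose n := by
    rw [← sum_mul, sum_range_choose_mul_choose_s8, mul_comm]
  calc _ = ∑ i ∈ range (n + 1), ∑ j ∈ range (n + 1), f i (i + j) :=
        sum_congr rfl fun i hi ↦ sum_congr rfl fun j _ ↦
          sum_range_choose_mul_choose_mul_choose_add (mem_range_succ_iff.mp hi) (mem_range.mp hi) j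
    _ = ∑ i ∈ range (n + 1), ∑ m ∈ range (n + 1), f i m :=
        sum_congr rfl fun i _ ↦ sum_range_comp_add_eq_sum_range (f_of_lt i) (f_of_gt i)
    _ = ∑ m ∈ range (n + 1), ∑ i ∈ range (n + 1), f i m := sum_comm
    _ = ∑ m ∈ range (n + 1), n.choose m ^ 2 * (n + m).choose n :=
        sum_congr rfl fun m _ ↦ sum_f m
end

section
/- For every real number b and every natural number n, T_n(b) = (1/π) · ∫_{0}^{π} (b − 2·cos θ)^n dθ, where T_n(b) = Σ_{k=0}^{⌊n/2⌋} C(n,k)·C(n−k,k)·b^{n−2k}. -/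
open Finset Real

/-- The polynomial `T_n(b) = T_n(b, 1) = ∑_{k=0}^{⌊n/2⌋} C(n,k) C(n−k,k) b^{n−2k}`. -/
noncomputable def T (n : ℕ) (b : ℝ) : ℝ :=
  ∑ k ∈ Finset.range (n / 2 + 1),
    (n.choose k : ℝ) * ((n - k).choose k : ℝ) * b ^ (n - 2 * k)

/-!
Expand `(b + 2 cos θ · c) ^ n` by the binomial theorem and integrate term by term. The moments of
`2 cos θ` over `[0, π]` obey the recurrence of the central binomial coefficients: the odd ones
vanish and the `2k`-th one is `π * C(2k,k)`. What remains is `C(n,2k) C(2k,k) = C(n,k) C(n−k,k)`.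
-/

/-- The generalized central trinomial coefficient
`T_n(b, c) = ∑_{k=0}^{⌊n/2⌋} C(n,k) C(n−k,k) b^{n−2k} c^k`, of which `T n b` is the case `c = 1`;
its arguments are allowed in any commutative semiring. -/
def centralTrinomial {R : Type*} [CommSemiring R] (n : ℕ) (b c : R) : R :=
  ∑ k ∈ range (n / 2 + 1), (n.choose k : R) * ((n - k).choose k : R) * b ^ (n - 2 * k) * c ^ k

theorem T_eq_centralTrinomial (n : ℕ) (b : ℝ) : T n b = centralTrinomial n b 1 := by
  simp only [T, centralTrinomial, one_pow, mul_one]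

theorem choose_two_mul_mul_centralBinom (n k : ℕ) :
    n.choose (2 * k) * k.centralBinom = n.choose k * (n - k).choose k := by
  have h := Nat.choose_mul (n := n) (show k ≤ 2 * k by lia)
  rwa [two_mul, Nat.add_sub_cancel, ← two_mul] at h

theorem sum_range_succ_eq_sum_even {M : Type*} [AddCommMonoid M] (f : ℕ → M)
    (hf : ∀ m, Odd m → f m = 0) (n : ℕ) :
    ∑ m ∈ range (n + 1), f m = ∑ k ∈ range (n / 2 + 1), f (2 * k) := by
  symm
  apply sum_of_injOn (2 * ·) (mul_right_injective₀ two_ne_zero).injOn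
  · intro k hk
    simp only [coe_range, Set.mem_Iio] at hk ⊢
    lia
  · intro m hm hm'
    refine hf m (Nat.not_even_iff_odd.mp fun ⟨k, hk⟩ ↦ hm' ⟨k, ?_, ?_⟩)
    · simp only [coe_range, Set.mem_Iio, mem_range] at hm ⊢
      lia
    · lia
  · exact fun _ _ ↦ rfl

theorem integral_two_mul_cos_pow_add_two (m : ℕ) :
    (m + 2) * ∫ θ in (0 : ℝ)..π, (2 * cos θ) ^ (m + 2) =
      4 * (m + 1) * ∫ θ in (0 : ℝ)..π, (2 * cos θ) ^ m := by
  have hcos : ∫ θ in (0 : ℝ)..π, cos θ ^ (m + 2) =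
      (m + 1) / (m + 2) * ∫ θ in (0 : ℝ)..π, cos θ ^ m := by
    simp [integral_cos_pow]
  simp only [mul_pow, intervalIntegral.integral_const_mul, hcos]
  field_simp
  ring

theorem integral_two_mul_cos_pow_odd {m : ℕ} (hm : Odd m) :
    ∫ θ in (0 : ℝ)..π, (2 * cos θ) ^ m = 0 := by
  obtain ⟨k, rfl⟩ := hm
  induction k with
  | zero => simp
  | succ k ih =>
    have h := integral_two_mul_cos_pow_add_two (2 * k + 1)
    rw [ih, mul_zero] at h
    exact (mul_eq_zero.mp h).resolve_left (by positivity)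

theorem integral_two_mul_cos_pow_even (k : ℕ) :
    ∫ θ in (0 : ℝ)..π, (2 * cos θ) ^ (2 * k) = π * k.centralBinom := by
  induction k with
  | zero => simp
  | succ k ih =>
    have hint := integral_two_mul_cos_pow_add_two (2 * k)
    have hbinom : ((k : ℝ) + 1) * (k + 1).centralBinom = 2 * (2 * k + 1) * k.centralBinom :=
      mod_cast Nat.succ_mul_centralBinom_succ k
    rw [ih] at hint
    push_cast at hint
    apply mul_left_cancel₀ (show 2 * (k : ℝ) + 2 ≠ 0 by positivity)
    rw [mul_add_one]
    linear_combination hint - 2 * π * hbinom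

section BanachAlgebra

variable {A : Type*} [NormedCommRing A] [NormedAlgebra ℝ A] [CompleteSpace A]

theorem integral_add_smul_pow {f : ℝ → ℝ} (hf : Continuous f) (x y : ℝ) (b c : A) (n : ℕ) :
    ∫ θ in x..y, (b + f θ • c) ^ n =
      ∑ m ∈ range (n + 1), (∫ θ in x..y, f θ ^ m) • (c ^ m * b ^ (n - m) * n.choose m) := by
  simp only [add_comm b, add_pow, smul_pow, smul_mul_assoc]
  rw [intervalIntegral.integral_finsetSum fun m _ ↦
    Continuous.intervalIntegrable (by fun_prop) x y]
  simp only [intervalIntegral.integral_smul_const]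

theorem T_eq_integral_general (b c : A) (n : ℕ) :
    centralTrinomial n b (c ^ 2) = (1 / π) • ∫ θ in (0 : ℝ)..π, (b + (2 * cos θ) • c) ^ n := by
  have hodd (m : ℕ) (hm : Odd m) :
      (∫ θ in (0 : ℝ)..π, (2 * cos θ) ^ m) • (c ^ m * b ^ (n - m) * n.choose m) = 0 := by
    rw [integral_two_mul_cos_pow_odd hm, zero_smul]
  rw [one_div, eq_inv_smul_iff₀ pi_ne_zero, integral_add_smul_pow (by fun_prop),
    sum_range_succ_eq_sum_even _ hodd, centralTrinomial, smul_sum]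
  refine sum_congr rfl fun k _ ↦ ?_
  have hchoose : (n.choose (2 * k) : A) * k.centralBinom = n.choose k * (n - k).choose k := by
    rw [← Nat.cast_mul, choose_two_mul_mul_centralBinom, Nat.cast_mul]
  rw [integral_two_mul_cos_pow_even, mul_smul, Nat.cast_smul_eq_nsmul, nsmul_eq_mul, ← hchoose]
  ring_nf

end BanachAlgebra

theorem T_eq_integral (b : ℝ) (n : ℕ) :
    T n b = (1 / π) * ∫ θ in (0 : ℝ)..π, (b - 2 * Real.cos θ) ^ n := by
  simpa [T_eq_centralTrinomial, sub_eq_add_neg] using T_eq_integral_general b (-1) n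
end

section
/- In ℚ, for every natural number n, C(2n,n) · Σ_{k=0}^{n} C(n,k)·C(2k,k)²·C(2n−2k,n−k)²·(1 + k·(−5·H_k + 5·H_{n−k} + 4·H_{2k} − 4·H_{2n−2k})) = C(2n,n) · Σ_{k=0}^{n} 4^{n−k}·C(2k,k)²·C(2n−2k,n−k). -/
open Finset

/-!
Put `a k = C(2k,k)² / k!` and `g k = 4 H_{2k} - 5 H_k`. The ratio `4 (2k+1)² / (k+1)³` of
consecutive `a k` defines the third order equation `θ³y = 4x (2θ+1)² y` with `θ = x d/dx`, and the
Frobenius method at `x = 0` gives the solutions `A = ∑ a k xᵏ` and `A log x + B` with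
`B = ∑ a k g k xᵏ`. The logarithms cancel in their Wronskian `A (A + θB) - B θA`, whose `n`-th
coefficient is the harmonic sum divided by `n!`. The Wronskian of two solutions of a third order
equation again satisfies a third order equation, which for the harmonic sums `v n` reads

  `(n+2)² v (n+2) = (32 (n+1) (n+2) + 12) v (n+1) - 256 (n+1)² v n`.

The right-hand sums are the coefficients of the product of `∑ C(2k,k)² xᵏ`, which satisfies a second
order equation, and `(1 - 16x)^(-1/2)`, which satisfies a first order one. The resulting second
order equation for the product gives the same recurrence.
-/

namespace HarmonicBinomial

section LogarithmicPairs

variable {S R : Type*} [CommSemiring S] [CommRing R] [Algebra S R] (D : Derivation S R R)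

/-- The derivative of a function with a logarithm: the pair `(f, g)` stands for `f log x + g`, and
`D` is extended by `D (log x) = 1`. -/
def logDerivation (u : R × R) : R × R := (D u.1, D u.2 + u.1)

/-- The determinant of two pairs, of which Wronskians of pairs of solutions are made. -/
def pairDet (u v : R × R) : R := u.1 * v.2 - u.2 * v.1

/-- The Wronskian of `f` and `f log x + g`, for the pair `u = (f, g)`; its logarithms cancel. -/
def logWronskian (u : R × R) : R := pairDet u (logDerivation D u)

theorem derivation_pairDet (u v : R × R) :
    D (pairDet u v) = pairDet (logDerivation D u) v + pairDet u (logDerivation D v) := by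
  simp only [pairDet, logDerivation, map_sub, D.leibniz, smul_eq_mul]
  ring

theorem logWronskian_ode {u : R × R} {p q r : R}
    (hu : logDerivation D (logDerivation D (logDerivation D u)) =
      p • logDerivation D (logDerivation D u) + q • logDerivation D u + r • u) :
    D (D (D (logWronskian D u)) - p * D (logWronskian D u) - q * logWronskian D u) =
      p * (D (D (logWronskian D u)) - p * D (logWronskian D u) - q * logWronskian D u)
        - r * logWronskian D u := by
  set u₁ := logDerivation D u with hu₁
  set u₂ := logDerivation D u₁ with hu₂
  have D_wronskian : D (logWronskian D u) = pairDet u u₂ := by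
    rw [logWronskian, derivation_pairDet, ← hu₁, ← hu₂, pairDet, pairDet]
    ring
  have D_D_wronskian : D (D (logWronskian D u)) - p * D (logWronskian D u) - q * logWronskian D u =
      pairDet u₁ u₂ := by
    rw [D_wronskian, derivation_pairDet, hu, logWronskian, ← hu₁]
    simp only [pairDet, Prod.fst_add, Prod.snd_add, Prod.smul_fst, Prod.smul_snd, smul_eq_mul]
    ring
  rw [D_D_wronskian, derivation_pairDet, hu, logWronskian, ← hu₁, ← hu₂]
  simp only [pairDet, Prod.fst_add, Prod.snd_add, Prod.smul_fst, Prod.smul_snd, smul_eq_mul]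
  ring

end LogarithmicPairs

section EulerOperator

open PowerSeries

theorem coeff_ofNat_mul {R : Type*} [Semiring R] (n m : ℕ) [m.AtLeastTwo] (f : R⟦X⟧) :
    coeff n ((ofNat(m) : R⟦X⟧) * f) = ofNat(m) * coeff n f := by
  rw [← map_ofNat (C (R := R)), coeff_C_mul]

section Theta

variable (R : Type*) [CommSemiring R]

/-- The Euler operator `θ = x d/dx` on formal power series. -/
noncomputable def theta : Derivation R R⟦X⟧ R⟦X⟧ := (X : R⟦X⟧) • d⁄dX R

variable {R}

theorem coeff_theta (n : ℕ) (f : R⟦X⟧) : coeff n (theta R f) = n * coeff n f := by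
  rw [theta, Derivation.smul_apply, smul_eq_mul]
  cases n with
  | zero => simp
  | succ n => rw [coeff_succ_X_mul, coeff_derivative, mul_comm, Nat.cast_succ]

theorem theta_X_mul (f : R⟦X⟧) : theta R (X * f) = X * (theta R f + f) := by
  simp only [theta, Derivation.smul_apply, Derivation.leibniz, derivative_X, smul_eq_mul]
  ring

theorem theta_ofNat_mul (m : ℕ) [m.AtLeastTwo] (f : R⟦X⟧) :
    theta R ((ofNat(m) : R⟦X⟧) * f) = ofNat(m) * theta R f := by
  ext n
  simp only [coeff_theta, coeff_ofNat_mul, mul_left_comm]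

end Theta

variable {R : Type*} [CommRing R]

theorem theta_theta_mul_of_ode {K M : R⟦X⟧}
    (hK : theta R (theta R K) = 4 * X * (4 * theta R (theta R K) + 4 * theta R K + K))
    (hM : theta R M = 8 * X * (2 * theta R M + M)) :
    theta R (theta R (K * M)) =
      4 * X * (8 * theta R (theta R (K * M)) + 8 * theta R (K * M) + 3 * (K * M)) -
        256 * X * (X * (theta R (theta R (K * M)) + 2 * theta R (K * M) + K * M)) := by
  have hM' : theta R (theta R M) =
      8 * X * (2 * theta R (theta R M) + 3 * theta R M + M) := by
    have := congrArg (theta R) hM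
    simp only [mul_assoc, theta_X_mul, theta_ofNat_mul, map_add] at this
    linear_combination this
  simp only [Derivation.leibniz, smul_eq_mul, map_add]
  linear_combination (1 - 16 * X) * M * hK +
    (2 * (1 - 16 * X) * theta R K - 8 * X * K) * hM + (1 - 16 * X) * K * hM'

theorem coeff_recurrence_of_logWronskian_ode {W : R⟦X⟧}
    (hW : theta R (theta R (theta R W) - 16 * X * theta R W - 16 * X * W) =
      16 * X * (theta R (theta R W) - 16 * X * theta R W - 16 * X * W) - 4 * X * W) (n : ℕ) :
    (n + 2) ^ 3 * coeff (n + 2) W =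
      (32 * (n + 1) * (n + 2) + 12) * coeff (n + 1) W - 256 * (n + 1) * coeff n W := by
  have := congrArg (coeff (n + 2)) hW
  simp only [map_sub, coeff_theta, mul_assoc, coeff_ofNat_mul, coeff_succ_X_mul] at this
  push_cast at this
  linear_combination this

theorem coeff_recurrence_of_ode {F : R⟦X⟧}
    (hF : theta R (theta R F) =
      4 * X * (8 * theta R (theta R F) + 8 * theta R F + 3 * F) -
        256 * X * (X * (theta R (theta R F) + 2 * theta R F + F))) (n : ℕ) :
    (n + 2) ^ 2 * coeff (n + 2) F =
      (32 * (n + 1) * (n + 2) + 12) * coeff (n + 1) F - 256 * (n + 1) ^ 2 * coeff n F := by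
  have := congrArg (coeff (n + 2)) hF
  simp only [map_sub, map_add, coeff_theta, mul_assoc, coeff_ofNat_mul, coeff_succ_X_mul] at this
  push_cast at this
  linear_combination this

end EulerOperator

theorem eq_of_second_order_recurrence {R : Type*} [Ring R] [NoZeroDivisors R] {p q r a b : ℕ → R}
    (hp : ∀ n, p n ≠ 0) (h₀ : a 0 = b 0) (h₁ : a 1 = b 1)
    (ha : ∀ n, p n * a (n + 2) = q n * a (n + 1) - r n * a n)
    (hb : ∀ n, p n * b (n + 2) = q n * b (n + 1) - r n * b n) : a = b := by
  funext n
  induction n using Nat.twoStepInduction with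
  | zero => exact h₀
  | one => exact h₁
  | more n ih ih' => exact mul_left_cancel₀ (hp n) (by rw [ha, hb, ih, ih'])

theorem succ_mul_centralBinom_succ_cast (R : Type*) [CommSemiring R] (k : ℕ) :
    ((k : R) + 1) * (k + 1).centralBinom = 2 * (2 * k + 1) * k.centralBinom := by
  exact_mod_cast congrArg (Nat.cast (R := R)) (Nat.succ_mul_centralBinom_succ k)

section HarmonicSums

open PowerSeries

/-- The coefficient `C(2k,k)² / k!` of the holomorphic Frobenius solution. -/
def frobeniusCoeff (k : ℕ) : ℚ := (k.centralBinom : ℚ) ^ 2 / k.factorial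

/-- The logarithmic derivative in `k` of `C(2k,k)² / k! = (2k)!² / k!⁵`, up to the additive constant
`γ`, which would only add a multiple of `A` to the solution `A log x + B`. -/
def frobeniusLogDeriv (k : ℕ) : ℚ := 4 * harmonic (2 * k) - 5 * harmonic k

/-- The pair `(A, B)` for which `A` and `A log x + B` are the Frobenius solutions at `0` of
`θ³y = 4x (2θ+1)² y`. -/
noncomputable def frobeniusPair : ℚ⟦X⟧ × ℚ⟦X⟧ :=
  (mk frobeniusCoeff, mk fun k ↦ frobeniusCoeff k * frobeniusLogDeriv k)

theorem frobeniusCoeff_succ (k : ℕ) :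
    ((k : ℚ) + 1) ^ 3 * frobeniusCoeff (k + 1) = 4 * (2 * k + 1) ^ 2 * frobeniusCoeff k := by
  have hc := succ_mul_centralBinom_succ_cast ℚ k
  have hk : (k.factorial : ℚ) ≠ 0 := by positivity
  rw [frobeniusCoeff, frobeniusCoeff, Nat.factorial_succ, Nat.cast_mul, Nat.cast_succ]
  field_simp
  linear_combination (((k : ℚ) + 1) * (k + 1).centralBinom + 2 * (2 * k + 1) * k.centralBinom) * hc

theorem frobeniusLogDeriv_succ (k : ℕ) :
    frobeniusLogDeriv (k + 1) = frobeniusLogDeriv k + 4 / (2 * k + 1) - 3 / (k + 1) := by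
  rw [frobeniusLogDeriv, frobeniusLogDeriv, mul_add_one, harmonic_succ, harmonic_succ,
    harmonic_succ]
  push_cast
  field_simp
  ring

theorem frobeniusCoeff_mul_frobeniusLogDeriv_succ (k : ℕ) :
    ((k : ℚ) + 1) ^ 3 * (frobeniusCoeff (k + 1) * frobeniusLogDeriv (k + 1)) +
        3 * (k + 1) ^ 2 * frobeniusCoeff (k + 1) =
      4 * (2 * k + 1) ^ 2 * (frobeniusCoeff k * frobeniusLogDeriv k) +
        16 * (2 * k + 1) * frobeniusCoeff k := by
  have hk : (2 * k + 1 : ℚ) ≠ 0 := by positivity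
  calc
    _ = ((k : ℚ) + 1) ^ 3 * frobeniusCoeff (k + 1) *
        (frobeniusLogDeriv k + 4 / (2 * k + 1)) := by
      rw [frobeniusLogDeriv_succ]
      field_simp
      ring
    _ = _ := by
      rw [frobeniusCoeff_succ]
      field_simp
      ring

theorem frobeniusPair_ode :
    logDerivation (theta ℚ) (logDerivation (theta ℚ) (logDerivation (theta ℚ) frobeniusPair)) =
      (16 * X : ℚ⟦X⟧) • logDerivation (theta ℚ) (logDerivation (theta ℚ) frobeniusPair) +
        (16 * X : ℚ⟦X⟧) • logDerivation (theta ℚ) frobeniusPair +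
        (4 * X : ℚ⟦X⟧) • frobeniusPair := by
  ext k <;> rcases k with _ | k <;>
    simp only [logDerivation, frobeniusPair, Prod.fst_add, Prod.snd_add, Prod.smul_fst,
      Prod.smul_snd, smul_eq_mul, map_add, coeff_theta, mul_assoc, coeff_ofNat_mul,
      coeff_succ_X_mul, coeff_zero_X_mul, coeff_mk, Nat.cast_zero, zero_mul, mul_zero, add_zero]
  · push_cast
    linear_combination frobeniusCoeff_succ k
  · push_cast
    linear_combination frobeniusCoeff_mul_frobeniusLogDeriv_succ k

theorem factorial_mul_coeff_logWronskian (n : ℕ) :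
    n.factorial * coeff n (logWronskian (theta ℚ) frobeniusPair) =
      ∑ k ∈ range (n + 1),
        (n.choose k : ℚ) * ((2 * k).choose k : ℚ) ^ 2 * ((2 * n - 2 * k).choose (n - k) : ℚ) ^ 2 *
          (1 + (k : ℚ) * (-5 * harmonic k + 5 * harmonic (n - k)
            + 4 * harmonic (2 * k) - 4 * harmonic (2 * n - 2 * k))) := by
  have hW : logWronskian (theta ℚ) frobeniusPair =
      (theta ℚ frobeniusPair.2 + frobeniusPair.1) * frobeniusPair.1 -
        theta ℚ frobeniusPair.1 * frobeniusPair.2 := by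
    rw [logWronskian, pairDet, logDerivation]
    ring
  rw [hW, map_sub, coeff_mul, coeff_mul, ← sum_sub_distrib,
    Nat.sum_antidiagonal_eq_sum_range_succ_mk, mul_sum]
  refine sum_congr rfl fun k hk ↦ ?_
  have hkn : k ≤ n := Nat.lt_succ_iff.mp (mem_range.mp hk)
  rw [Nat.cast_choose ℚ hkn, ← Nat.mul_sub, ← Nat.centralBinom_eq_two_mul_choose,
    ← Nat.centralBinom_eq_two_mul_choose]
  simp only [frobeniusPair, frobeniusCoeff, frobeniusLogDeriv, map_add, coeff_theta, coeff_mk]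
  field_simp
  ring

/-- The series `∑ C(2k,k)² xᵏ`. -/
noncomputable def centralBinomSqSeries : ℚ⟦X⟧ := mk fun k ↦ (k.centralBinom : ℚ) ^ 2

/-- The series `(1 - 16x)^(-1/2) = ∑ 4ᵏ C(2k,k) xᵏ`. -/
noncomputable def invSqrtSeries : ℚ⟦X⟧ := mk fun k ↦ (4 : ℚ) ^ k * k.centralBinom

theorem centralBinomSqSeries_ode :
    theta ℚ (theta ℚ centralBinomSqSeries) =
      4 * X * (4 * theta ℚ (theta ℚ centralBinomSqSeries) + 4 * theta ℚ centralBinomSqSeries +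
        centralBinomSqSeries) := by
  ext k
  cases k with
  | zero => simp [coeff_theta]
  | succ k =>
    simp only [centralBinomSqSeries, mul_assoc, map_add, coeff_theta, coeff_ofNat_mul,
      coeff_succ_X_mul, coeff_mk]
    push_cast
    linear_combination (((k : ℚ) + 1) * (k + 1).centralBinom +
      2 * (2 * k + 1) * k.centralBinom) * succ_mul_centralBinom_succ_cast ℚ k

theorem invSqrtSeries_ode :
    theta ℚ invSqrtSeries = 8 * X * (2 * theta ℚ invSqrtSeries + invSqrtSeries) := by
  ext k
  cases k with
  | zero => simp [coeff_theta]
  | succ k =>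
    simp only [invSqrtSeries, mul_assoc, map_add, coeff_theta, coeff_ofNat_mul,
      coeff_succ_X_mul, coeff_mk]
    push_cast
    linear_combination 4 ^ (k + 1) * succ_mul_centralBinom_succ_cast ℚ k

theorem coeff_centralBinomSqSeries_mul_invSqrtSeries (n : ℕ) :
    coeff n (centralBinomSqSeries * invSqrtSeries) =
      ∑ k ∈ range (n + 1),
        (4 : ℚ) ^ (n - k) * ((2 * k).choose k : ℚ) ^ 2 * ((2 * n - 2 * k).choose (n - k) : ℚ) := by
  rw [coeff_mul, Nat.sum_antidiagonal_eq_sum_range_succ_mk]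
  refine sum_congr rfl fun k _ ↦ ?_
  rw [centralBinomSqSeries, invSqrtSeries, coeff_mk, coeff_mk, ← Nat.mul_sub,
    ← Nat.centralBinom_eq_two_mul_choose, ← Nat.centralBinom_eq_two_mul_choose]
  ring

theorem factorial_mul_coeff_logWronskian_eq_coeff (n : ℕ) :
    n.factorial * coeff n (logWronskian (theta ℚ) frobeniusPair) =
      coeff n (centralBinomSqSeries * invSqrtSeries) := by
  set W := logWronskian (theta ℚ) frobeniusPair
  set F := centralBinomSqSeries * invSqrtSeries
  have wronskian_recurrence (n : ℕ) :
      ((n : ℚ) + 2) ^ 2 * ((n + 2).factorial * coeff (n + 2) W) =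
        (32 * (n + 1) * (n + 2) + 12) * ((n + 1).factorial * coeff (n + 1) W) -
          256 * (n + 1) ^ 2 * (n.factorial * coeff n W) := by
    have := coeff_recurrence_of_logWronskian_ode (logWronskian_ode (theta ℚ) frobeniusPair_ode) n
    simp only [Nat.factorial_succ]
    push_cast
    linear_combination ((n : ℚ) + 1) * n.factorial * this
  have product_recurrence := coeff_recurrence_of_ode
    (theta_theta_mul_of_ode centralBinomSqSeries_ode invSqrtSeries_ode)
  have initial_values : Nat.factorial 0 * coeff 0 W = coeff 0 F ∧
      Nat.factorial 1 * coeff 1 W = coeff 1 F := by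
    constructor <;>
      rw [factorial_mul_coeff_logWronskian, coeff_centralBinomSqSeries_mul_invSqrtSeries] <;>
      norm_num [sum_range_succ, harmonic]
  exact congrFun (eq_of_second_order_recurrence
    (a := fun n ↦ n.factorial * coeff n W) (b := fun n ↦ coeff n F) (fun n ↦ by positivity)
    initial_values.1 initial_values.2 wronskian_recurrence product_recurrence) n

end HarmonicSums

end HarmonicBinomial

theorem harmonic_binomial_identity_one_half (n : ℕ) :
    ((2 * n).choose n : ℚ) *
        ∑ k ∈ Finset.range (n + 1),
          (n.choose k : ℚ) * ((2 * k).choose k : ℚ) ^ 2 * ((2 * n - 2 * k).choose (n - k) : ℚ) ^ 2 *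
            (1 + (k : ℚ) * (-5 * harmonic k + 5 * harmonic (n - k)
              + 4 * harmonic (2 * k) - 4 * harmonic (2 * n - 2 * k))) =
      ((2 * n).choose n : ℚ) *
        ∑ k ∈ Finset.range (n + 1),
          (4 : ℚ) ^ (n - k) * ((2 * k).choose k : ℚ) ^ 2 * ((2 * n - 2 * k).choose (n - k) : ℚ) := by
  rw [← HarmonicBinomial.factorial_mul_coeff_logWronskian,
    ← HarmonicBinomial.coeff_centralBinomSqSeries_mul_invSqrtSeries,
    HarmonicBinomial.factorial_mul_coeff_logWronskian_eq_coeff]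
end

section
/- For every natural number N, Σ_{k=0}^{⌊N/2⌋} C(2(N−k),N−k)·C(3(N−k),N−k)·C(N−k,k)·C(N−2k,k) = C(2N,N) · Σ_{j=0}^{N} C(N,j)²·C(2j,j). (Equivalently, as formal power series, Σ_{n≥0} C(2n,n)·C(3n,n)·U_n(x) = Σ_{N≥0} A_N x^N where U_n(x) = Σ_{k} C(n,k)·C(n−k,k)·x^{n+k} and A_N = C(2N,N)·Σ_{j=0}^{N} C(N,j)²·C(2j,j).) -/
open Finset

/-!
Put `n = N - k`.  The summand on the left is `(3n)! / (n!² k!² (N - 3k)!)`, which is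
`C(2N, N) * C(N, k)² * C(3n, 2N)`, so the claim is
`∑ k, C(N, k)² * C(3(N - k), 2N) = ∑ j, C(N, j)² * C(2j, j)`.
Up to reversing the second sum, the two sides are the coefficients of `s^N` in
`∑ k, C(N, k)² * a^k * b^(N - k)` for `(a, b) = (s³, (1 + s)³)` and `(a, b) = (s, (1 + s)²)`, and
this sum is the coefficient of `x^N` in `((1 + x) * (a * x + b))^N`.

The coefficient of `x^N` in `f^N` does not change when `f(s, x)` is replaced by
`f(s, c * x) / c`, where `c` depends on `s` only, and likewise with the variables exchanged.
Three such substitutions, each with `c` of the form `1 + x` or `1 + s`, lead from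
`(1 + x) * (s³ * x + (1 + s)³)` to `(1 + x) * (s * x + (1 + s)²)`.
-/

section DiagonalCoefficient

open Polynomial Polynomial.Bivariate

section CommSemiring

variable {R : Type*} [CommSemiring R]

lemma coeff_pow_self_eq_of_comp_C_mul_X {a : R} (ha : IsLeftRegular a) {p q : R[X]}
    (h : p.comp (C a * X) = C a * q) (n : ℕ) : (p ^ n).coeff n = (q ^ n).coeff n := by
  apply ha.pow n
  calc a ^ n * (p ^ n).coeff n
      = ((p ^ n).comp (C a * X)).coeff n := by rw [comp_C_mul_X_coeff, mul_comm]
    _ = a ^ n * (q ^ n).coeff n := by rw [pow_comp, h, mul_pow, ← C_pow, coeff_C_mul]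

lemma coeff_one_add_X_mul_linear_pow_self (a b : R) (n : ℕ) :
    (((1 + X) * (C a * X + C b)) ^ n).coeff n =
      ∑ k ∈ range (n + 1), (n.choose k : R) ^ 2 * (a ^ k * b ^ (n - k)) := by
  rw [mul_pow, add_pow (C a * X), mul_sum, finsetSum_coeff]
  refine sum_congr rfl fun k hk ↦ ?_
  have hkn : k ≤ n := mem_range_succ_iff.mp hk
  have h_term : (1 + X) ^ n * ((C a * X) ^ k * C b ^ (n - k) * (n.choose k : R[X])) =
      C (a ^ k * b ^ (n - k) * n.choose k) * ((1 + X) ^ n * X ^ k) := by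
    simp only [C_mul, C_pow, C_eq_natCast]
    ring
  rw [h_term, coeff_C_mul, coeff_mul_X_pow', if_pos hkn, coeff_one_add_X_pow,
    Nat.choose_symm hkn]
  ring

lemma coeff_coeff_swap (f : R[X][Y]) (m n : ℕ) :
    ((swap f).coeff m).coeff n = (f.coeff n).coeff m := by
  induction f using Polynomial.induction_on' with
  | add p q hp hq => simp only [map_add, coeff_add, hp, hq]
  | monomial i p =>
    induction p using Polynomial.induction_on' with
    | add p q hp hq => simp only [map_add, coeff_add, hp, hq]
    | monomial j r =>
      rw [swap_monomial_monomial]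
      simp only [coeff_monomial]
      split_ifs <;> simp_all [coeff_monomial]

/-- The coefficient of `x^n y^n` in `f^n`, that is, the constant term of the `n`-th power of the
Laurent polynomial `f / (x y)`. -/
noncomputable def diagCoeff (f : R[X][Y]) (n : ℕ) : R := ((f ^ n).coeff n).coeff n

lemma diagCoeff_swap (f : R[X][Y]) (n : ℕ) : diagCoeff (swap f) n = diagCoeff f n := by
  rw [diagCoeff, ← map_pow, coeff_coeff_swap, diagCoeff]

lemma diagCoeff_eq_of_comp {a : R[X]} (ha : IsLeftRegular a) {f g : R[X][Y]}
    (h : f.comp (C a * Y) = C a * g) (n : ℕ) : diagCoeff f n = diagCoeff g n := by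
  rw [diagCoeff, coeff_pow_self_eq_of_comp_C_mul_X ha h, diagCoeff]

lemma diagCoeff_one_add_Y_mul_linear (a b : R[X]) (n : ℕ) :
    diagCoeff ((1 + Y) * (C a * Y + C b)) n =
      ∑ k ∈ range (n + 1), (n.choose k : R) ^ 2 * (a ^ k * b ^ (n - k)).coeff n := by
  rw [diagCoeff, coeff_one_add_X_mul_linear_pow_self, finsetSum_coeff]
  simp only [← Nat.cast_pow, coeff_natCast_mul]

end CommSemiring

section Cancel

variable {R : Type*} [CommSemiring R] [Nontrivial R] [IsCancelAdd R] [IsCancelMulZero R]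

lemma isLeftRegular_one_add_X : IsLeftRegular (1 + X : R[X]) :=
  (IsRegular.of_ne_zero (by rw [add_comm]; exact X_add_C_ne_zero 1)).left

lemma diagCoeff_one_add_Y_mul_cubic_eq_quadratic (n : ℕ) :
    diagCoeff ((1 + Y) * (C (X ^ 3) * Y + C ((1 + X) ^ 3)) : R[X][Y]) n =
      diagCoeff ((1 + Y) * (C X * Y + C ((1 + X) ^ 2)) : R[X][Y]) n := by
  set f : R[X][Y] := (1 + Y) * (C (X ^ 3) * Y + C ((1 + X) ^ 3)) with hf
  set g : R[X][Y] := (1 + Y) * (C X * Y + C ((1 + X) ^ 2)) with hg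
  let p : R[X][Y] := Y ^ 2 + (2 + 3 * C X) * Y + (1 + C X) ^ 3
  let q : R[X][Y] := (1 + C X) * Y ^ 2 + (2 + 3 * C X) * Y + (1 + C X) ^ 2
  have h_pf : (swap p).comp (C (1 + X) * Y) = C (1 + X) * swap f := by
    simp only [p, hf, map_add, map_mul, map_pow, map_one, map_ofNat, swap_X, swap_Y,
      add_comp, mul_comp, pow_comp, X_comp, C_comp, one_comp, ofNat_comp]
    ring
  have h_pq : p.comp (C (1 + X) * Y) = C (1 + X) * q := by
    simp only [p, q, map_add, map_one,
      add_comp, mul_comp, pow_comp, X_comp, C_comp, one_comp, ofNat_comp]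
    ring
  have h_qg : (swap q).comp (C (1 + X) * Y) = C (1 + X) * swap g := by
    simp only [q, hg, map_add, map_mul, map_pow, map_one, map_ofNat, swap_X, swap_Y,
      add_comp, mul_comp, pow_comp, X_comp, C_comp, one_comp, ofNat_comp]
    ring
  calc diagCoeff f n
      = diagCoeff p n := by
        rw [← diagCoeff_swap f, ← diagCoeff_eq_of_comp isLeftRegular_one_add_X h_pf,
          diagCoeff_swap]
    _ = diagCoeff q n := diagCoeff_eq_of_comp isLeftRegular_one_add_X h_pq n
    _ = diagCoeff g n := by
        rw [← diagCoeff_swap q, diagCoeff_eq_of_comp isLeftRegular_one_add_X h_qg,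
          diagCoeff_swap]

end Cancel

lemma diagCoeff_one_add_Y_mul_cubic (n : ℕ) :
    diagCoeff ((1 + Y) * (C (X ^ 3) * Y + C ((1 + X) ^ 3)) : ℕ[X][Y]) n =
      ∑ k ∈ range (n + 1), n.choose k ^ 2 * (3 * (n - k)).choose (2 * n) := by
  simp only [diagCoeff_one_add_Y_mul_linear, Nat.cast_id]
  refine sum_congr rfl fun k hk ↦ ?_
  have hkn : k ≤ n := mem_range_succ_iff.mp hk
  rw [← pow_mul, ← pow_mul, coeff_X_pow_mul', coeff_one_add_X_pow, Nat.cast_id]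
  split_ifs
  · rw [Nat.choose_symm_of_eq_add (by lia : 3 * (n - k) = n - 3 * k + 2 * n)]
  · rw [Nat.choose_eq_zero_of_lt (by lia : 3 * (n - k) < 2 * n)]

lemma diagCoeff_one_add_Y_mul_quadratic (n : ℕ) :
    diagCoeff ((1 + Y) * (C X * Y + C ((1 + X) ^ 2)) : ℕ[X][Y]) n =
      ∑ j ∈ range (n + 1), n.choose j ^ 2 * (2 * j).choose j := by
  rw [diagCoeff_one_add_Y_mul_linear, ← sum_range_reflect]
  simp only [Nat.cast_id]
  refine sum_congr rfl fun j hj ↦ ?_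
  have hjn : j ≤ n := mem_range_succ_iff.mp hj
  rw [show n + 1 - 1 - j = n - j by lia, Nat.choose_symm hjn, Nat.sub_sub_self hjn, ← pow_mul,
    coeff_X_pow_mul', if_pos (Nat.sub_le n j), Nat.sub_sub_self hjn, coeff_one_add_X_pow,
    Nat.cast_id]

end DiagonalCoefficient

lemma sum_choose_sq_mul_choose_three_mul (n : ℕ) :
    ∑ k ∈ range (n + 1), n.choose k ^ 2 * (3 * (n - k)).choose (2 * n) =
      ∑ j ∈ range (n + 1), n.choose j ^ 2 * (2 * j).choose j := by
  rw [← diagCoeff_one_add_Y_mul_cubic, diagCoeff_one_add_Y_mul_cubic_eq_quadratic,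
    diagCoeff_one_add_Y_mul_quadratic]

lemma choose_mul_choose_three_mul_mul_choose_mul_choose {N k : ℕ} (hk : k ≤ N) :
    (2 * (N - k)).choose (N - k) * (3 * (N - k)).choose (N - k) *
        (N - k).choose k * (N - 2 * k).choose k =
      (2 * N).choose N * (N.choose k ^ 2 * (3 * (N - k)).choose (2 * N)) := by
  rcases lt_or_ge N (3 * k) with hN | hN
  · rw [Nat.choose_eq_zero_of_lt (by lia : N - 2 * k < k),
      Nat.choose_eq_zero_of_lt (by lia : 3 * (N - k) < 2 * N)]
    simp only [mul_zero]
  · qify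
    rw [Nat.cast_choose ℚ (by lia : N - k ≤ 2 * (N - k)),
      Nat.cast_choose ℚ (by lia : N - k ≤ 3 * (N - k)), Nat.cast_choose ℚ (by lia : k ≤ N - k),
      Nat.cast_choose ℚ (by lia : k ≤ N - 2 * k), Nat.cast_choose ℚ (by lia : N ≤ 2 * N),
      Nat.cast_choose ℚ hk, Nat.cast_choose ℚ (by lia : 2 * N ≤ 3 * (N - k)),
      show 2 * (N - k) - (N - k) = N - k by lia, show 3 * (N - k) - (N - k) = 2 * (N - k) by lia,
      show N - k - k = N - 2 * k by lia, show N - 2 * k - k = N - 3 * k by lia,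
      show 2 * N - N = N by lia, show 3 * (N - k) - 2 * N = N - 3 * k by lia]
    field_simp

theorem sum_U_coeff_eq_central_binomial_mul_sum (N : ℕ) :
    (∑ k ∈ Finset.range (N / 2 + 1),
        (2 * (N - k)).choose (N - k) * (3 * (N - k)).choose (N - k) *
          (N - k).choose k * (N - 2 * k).choose k) =
      (2 * N).choose N * ∑ j ∈ Finset.range (N + 1), (N.choose j) ^ 2 * (2 * j).choose j := by
  have h_range : range (N / 2 + 1) ⊆ range (N + 1) := range_subset_range.mpr (by lia)
  rw [← sum_choose_sq_mul_choose_three_mul, mul_sum, sum_subset h_range]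
  · exact sum_congr rfl fun k hk ↦
      choose_mul_choose_three_mul_mul_choose_mul_choose (mem_range_succ_iff.mp hk)
  · intro k _ hk
    rw [mem_range] at hk
    rw [Nat.choose_eq_zero_of_lt (by lia : N - 2 * k < k), mul_zero]
end
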